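/- arXiv:1903.06018 — 4 statements merged into one kernel-verified Lean document; each statement's English description precedes it below -/
import Mathlib

section
/- Let E, A_xx be M_x×M_x, A_xv be M_x×M_v, A_zx be M_z×M_x, A_zv be M_z×M_v, C_x be M_y×M_x, C_v be M_y×M_v, and Φ be M_v×M_z complex matrices, with I_{M_v} − Φ A_zv invertible. Define A = A_xx + A_xv (I − Φ A_zv)^{-1} Φ A_zx and C = C_x + C_v (I − Φ A_zv)^{-1} Φ A_zx. Then for every complex λ_0, the stacked matrix col{λ_0 E − A, C} has full column rank if and only if the matrix Ξ^[o](λ_0) = [[λ_0 E − A_xx, −A_xv],[−C_x, −C_v],[−Φ A_zx, I − Φ A_zv]] has full column rank. -/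
/-!
Since `I - Φ Azv` is invertible, the last block row of `Ξ⁽ᵒ⁾(λ₀)` lets one solve for the `v`-part
of a kernel vector in terms of its `x`-part. What remains is the Schur complement of `I - Φ Azv`,
which is `col{λ₀E - A, C}` up to the sign of its second block. So the two kernels are isomorphic,
and by rank–nullity the ranks differ by exactly `Mv`.
-/

section

open Matrix Module

variable {l m n p : Type*}

lemma fromRows_fromBlocks_fromCols {q α : Type*} (A : Matrix l m α) (B : Matrix l n α)
    (C : Matrix p m α) (D : Matrix p n α) (F : Matrix q m α) (G : Matrix q n α) :
    fromRows (fromBlocks A B C D) (fromCols F G) =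
      fromBlocks (fromRows A C) (fromRows B D) F G := by
  ext ((_ | _) | _) (_ | _) <;> rfl

lemma fromRows_mulVec_eq_zero_iff {α : Type*} [Semiring α] [Fintype n]
    (M : Matrix l n α) (N : Matrix m n α) (x : n → α) :
    fromRows M N *ᵥ x = 0 ↔ M *ᵥ x = 0 ∧ N *ᵥ x = 0 := by
  rw [fromRows_mulVec, ← Sum.elim_zero_zero, Sum.elim_eq_iff]

lemma mulVec_fromRows_one_injective {α : Type*} [Semiring α] [Fintype n] [DecidableEq n]
    (M : Matrix l n α) : Function.Injective (fromRows (1 : Matrix n n α) M).mulVec := fun x y h ↦ by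
  simpa only [fromRows_mulVec, one_mulVec, Sum.elim_comp_inl] using congrArg (· ∘ Sum.inl) h

variable {R : Type*} [CommRing R]

lemma rank_eq_of_ker_mulVecLin_eq [Fintype n] {M : Matrix l n R} {N : Matrix m n R}
    (h : LinearMap.ker M.mulVecLin = LinearMap.ker N.mulVecLin) : M.rank = N.rank :=
  (M.mulVecLin.quotKerEquivRange.symm ≪≫ₗ Submodule.quotEquivOfEq _ _ h ≪≫ₗ
    N.mulVecLin.quotKerEquivRange).finrank_eq

lemma rank_add_finrank_ker_mulVecLin [IsDomain R] [Fintype n] (M : Matrix m n R) :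
    M.rank + finrank R (LinearMap.ker M.mulVecLin) = Fintype.card n := by
  rw [Matrix.rank, ← M.mulVecLin.quotKerEquivRange.finrank_eq,
    Submodule.finrank_quotient_add_finrank, finrank_fintype_fun_eq_card]

lemma rank_fromRows_neg_right [Fintype n] (M : Matrix l n R) (N : Matrix m n R) :
    (fromRows M (-N)).rank = (fromRows M N).rank := by
  refine rank_eq_of_ker_mulVecLin_eq (Submodule.ext fun x ↦ ?_)
  simp only [LinearMap.mem_ker, mulVecLin_apply, fromRows_mulVec_eq_zero_iff, neg_mulVec,
    neg_eq_zero]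

section SchurComplement

variable [Fintype m] [Fintype n] [DecidableEq n]

lemma mulVec_add_mulVec_eq_zero_iff {D : Matrix n n R} (hD : IsUnit D) (C : Matrix n m R)
    (x : m → R) (v : n → R) : C *ᵥ x + D *ᵥ v = 0 ↔ v = -(D⁻¹ * C) *ᵥ x := by
  have hdet : IsUnit D.det := (isUnit_iff_isUnit_det D).1 hD
  rw [← (mulVec_injective_of_isUnit hD).eq_iff (a := v), mulVec_mulVec, Matrix.mul_neg,
    mul_nonsing_inv_cancel_left D C hdet, neg_mulVec, eq_neg_iff_add_eq_zero, add_comm]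

lemma fromBlocks_mulVec_sumElim_eq_zero_iff (A : Matrix l m R) (B : Matrix l n R)
    (C : Matrix n m R) {D : Matrix n n R} (hD : IsUnit D) (x : m → R) (v : n → R) :
    fromBlocks A B C D *ᵥ Sum.elim x v = 0 ↔
      (A - B * D⁻¹ * C) *ᵥ x = 0 ∧ v = -(D⁻¹ * C) *ᵥ x := by
  rw [← fromRows_fromCols_eq_fromBlocks, fromRows_mulVec_eq_zero_iff, fromCols_mulVec_sumElim,
    fromCols_mulVec_sumElim, mulVec_add_mulVec_eq_zero_iff hD]
  refine and_congr_left ?_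
  rintro rfl
  rw [mulVec_mulVec, ← add_mulVec, Matrix.mul_neg, ← sub_eq_add_neg, Matrix.mul_assoc]

lemma ker_mulVecLin_fromBlocks [DecidableEq m] (A : Matrix l m R) (B : Matrix l n R)
    (C : Matrix n m R) {D : Matrix n n R} (hD : IsUnit D) :
    LinearMap.ker (fromBlocks A B C D).mulVecLin =
      (LinearMap.ker (A - B * D⁻¹ * C).mulVecLin).map (fromRows 1 (-(D⁻¹ * C))).mulVecLin := by
  ext w
  obtain ⟨x, v, rfl⟩ : ∃ x v, w = Sum.elim x v :=
    ⟨w ∘ Sum.inl, w ∘ Sum.inr, (Sum.elim_comp_inl_inr w).symm⟩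
  simp only [Submodule.mem_map, LinearMap.mem_ker, mulVecLin_apply, fromRows_mulVec, one_mulVec,
    fromBlocks_mulVec_sumElim_eq_zero_iff A B C hD, Sum.elim_eq_iff]
  constructor
  · rintro ⟨hx, rfl⟩
    exact ⟨x, hx, rfl, rfl⟩
  · rintro ⟨_, hx, rfl, rfl⟩
    exact ⟨hx, rfl⟩

lemma rank_fromBlocks_eq_rank_schurComplement_add_card [IsDomain R] (A : Matrix l m R)
    (B : Matrix l n R) (C : Matrix n m R) {D : Matrix n n R} (hD : IsUnit D) :
    (fromBlocks A B C D).rank = (A - B * D⁻¹ * C).rank + Fintype.card n := by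
  classical
  have finrank_ker : finrank R (LinearMap.ker (fromBlocks A B C D).mulVecLin) =
      finrank R (LinearMap.ker (A - B * D⁻¹ * C).mulVecLin) := by
    rw [ker_mulVecLin_fromBlocks A B C hD]
    exact (Submodule.equivMapOfInjective _ (mulVec_fromRows_one_injective _) _).finrank_eq.symm
  have rank_nullity := rank_add_finrank_ker_mulVecLin (fromBlocks A B C D)
  have rank_nullity_schur := rank_add_finrank_ker_mulVecLin (A - B * D⁻¹ * C)
  rw [Fintype.card_sum] at rank_nullity
  omega

end SchurComplement

theorem observability_pencil_iff_structured_pencil_general [IsDomain R] {x v z y : Type*}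
    [Fintype x] [Fintype v] [DecidableEq v] [Fintype z]
    (E Axx : Matrix p x R) (Axv : Matrix p v R) (Azx : Matrix z x R) (Azv : Matrix z v R)
    (Cx : Matrix y x R) (Cv : Matrix y v R) (Φ : Matrix v z R)
    (hwp : IsUnit (1 - Φ * Azv))
    (A : Matrix p x R) (hA : A = Axx + Axv * (1 - Φ * Azv)⁻¹ * (Φ * Azx))
    (Cmat : Matrix y x R) (hC : Cmat = Cx + Cv * (1 - Φ * Azv)⁻¹ * (Φ * Azx))
    (lam₀ : R) :
    (fromRows
        (fromBlocks (lam₀ • E - Axx) (-Axv) (-Cx) (-Cv))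
        (fromCols (-(Φ * Azx)) (1 - Φ * Azv))).rank =
      (fromRows (lam₀ • E - A) Cmat).rank + Fintype.card v := by
  have schurComplement_eq :
      fromRows (lam₀ • E - Axx) (-Cx) -
          fromRows (-Axv) (-Cv) * (1 - Φ * Azv)⁻¹ * (-(Φ * Azx)) =
        fromRows (lam₀ • E - A) (-Cmat) := by
    rw [hA, hC]
    simp only [fromRows_mul, Matrix.neg_mul, Matrix.mul_neg]
    ext (i | i) j <;>
      simp only [Matrix.sub_apply, Matrix.neg_apply, Matrix.add_apply, fromRows_apply_inl,
        fromRows_apply_inr] <;> ring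
  rw [fromRows_fromBlocks_fromCols, rank_fromBlocks_eq_rank_schurComplement_add_card _ _ _ hwp,
    schurComplement_eq, rank_fromRows_neg_right]

end

/-- **Theorem 2, pencil condition.** Under well-posedness (`I − Φ Azv` invertible), with
`A = Axx + Axv (I − Φ Azv)⁻¹ Φ Azx` and `C = Cx + Cv (I − Φ Azv)⁻¹ Φ Azx`, the stacked
matrix `col{λ₀E − A, C}` has full column rank iff the matrix
`Ξ⁽ᵒ⁾(λ₀) = [[λ₀E − Axx, −Axv],[−Cx, −Cv],[−Φ Azx, I − Φ Azv]]` has full column rank. -/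
theorem observability_pencil_iff_structured_pencil
    (Mx Mv Mz My : ℕ)
    (E Axx : Matrix (Fin Mx) (Fin Mx) ℂ)
    (Axv : Matrix (Fin Mx) (Fin Mv) ℂ)
    (Azx : Matrix (Fin Mz) (Fin Mx) ℂ)
    (Azv : Matrix (Fin Mz) (Fin Mv) ℂ)
    (Cx : Matrix (Fin My) (Fin Mx) ℂ)
    (Cv : Matrix (Fin My) (Fin Mv) ℂ)
    (Φ : Matrix (Fin Mv) (Fin Mz) ℂ)
    (hwp : IsUnit ((1 : Matrix (Fin Mv) (Fin Mv) ℂ) - Φ * Azv))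
    (A : Matrix (Fin Mx) (Fin Mx) ℂ)
    (hA : A = Axx + Axv * ((1 : Matrix (Fin Mv) (Fin Mv) ℂ) - Φ * Azv)⁻¹ * (Φ * Azx))
    (Cmat : Matrix (Fin My) (Fin Mx) ℂ)
    (hC : Cmat = Cx + Cv * ((1 : Matrix (Fin Mv) (Fin Mv) ℂ) - Φ * Azv)⁻¹ * (Φ * Azx))
    (lam₀ : ℂ) :
    (Matrix.fromRows (lam₀ • E - A) Cmat).rank = Mx ↔
    (Matrix.fromRows
        (Matrix.fromBlocks (lam₀ • E - Axx) (-Axv) (-Cx) (-Cv))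
        (Matrix.fromCols (-(Φ * Azx)) ((1 : Matrix (Fin Mv) (Fin Mv) ℂ) - Φ * Azv))).rank
      = Mx + Mv := by
  rw [observability_pencil_iff_structured_pencil_general E Axx Axv Azx Azv Cx Cv Φ hwp A hA Cmat hC,
    Fintype.card_fin, Nat.add_right_cancel_iff]
end

section
/- Let E, A_xx be M_x×M_x, A_xv be M_x×M_v, A_zx be M_z×M_x, A_zv be M_z×M_v, C_x be M_y×M_x, C_v be M_y×M_v, and Φ be M_v×M_z complex matrices, with I_{M_v} − Φ A_zv invertible. Define C = C_x + C_v (I − Φ A_zv)^{-1} Φ A_zx. Then the stacked matrix col{E, C} has full column rank if and only if the matrix Ξ_∞^[o] = [[E, 0],[−C_x, −C_v],[−Φ A_zx, I − Φ A_zv]] has full column rank. -/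
/-!
Up to regrouping its block rows, `Ξ∞⁽ᵒ⁾` is a 2 × 2 block matrix whose lower right block
`I − Φ Azv` is invertible and whose Schur complement with respect to that block is `col{E, −C}`.
Column operations clear the lower left block, and the resulting block upper triangular matrix, with
`col{E, −C}` and the invertible `I − Φ Azv` on its diagonal, has full column rank exactly when
`col{E, −C}` has.
-/

section FullColumnRank

open Matrix

variable {R m m₁ m₂ n n₁ n₂ : Type*}

theorem sumElim_eq_zero_iff [Zero R] {f : m → R} {g : n → R} :
    Sum.elim f g = 0 ↔ f = 0 ∧ g = 0 := by
  rw [← Sum.elim_zero_zero, Sum.elim_eq_iff]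

theorem fromRows_mulVec_eq_zero_iff_s11 [Semiring R] [Fintype n] (A : Matrix m₁ n R)
    (B : Matrix m₂ n R) (v : n → R) :
    fromRows A B *ᵥ v = 0 ↔ A *ᵥ v = 0 ∧ B *ᵥ v = 0 := by
  rw [fromRows_mulVec, sumElim_eq_zero_iff]

variable [CommRing R] [Fintype n] [Fintype n₁] [Fintype n₂]

-- Rank–nullity fails over a general commutative ring; the Orzech property takes its place here.
theorem rank_eq_card_iff_forall_mulVec_eq_zero [Nontrivial R] (A : Matrix m n R) :
    A.rank = Fintype.card n ↔ ∀ v, A *ᵥ v = 0 → v = 0 := by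
  rw [← ker_mulVecLin_eq_bot_iff, LinearMap.ker_eq_bot, coe_mulVecLin, mulVec_injective_iff,
    linearIndependent_iff_card_eq_finrank_span, rank_eq_finrank_span_cols, Set.finrank, eq_comm]

theorem rank_fromRows_neg_right_eq_card_iff [Nontrivial R] (A : Matrix m₁ n R)
    (B : Matrix m₂ n R) :
    (fromRows A (-B)).rank = Fintype.card n ↔ (fromRows A B).rank = Fintype.card n := by
  simp only [rank_eq_card_iff_forall_mulVec_eq_zero, fromRows_mulVec_eq_zero_iff_s11, neg_mulVec,
    neg_eq_zero]

theorem rank_fromBlocks_eq_rank_fromBlocks_schur [DecidableEq n₂] (A : Matrix m₁ n₁ R)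
    (B : Matrix m₁ n₂ R) (C : Matrix n₂ n₁ R) {D : Matrix n₂ n₂ R} (hD : IsUnit D) :
    (fromBlocks A B C D).rank = (fromBlocks (A - B * D⁻¹ * C) B 0 D).rank := by
  classical
  have hD_det : IsUnit D.det := (isUnit_iff_isUnit_det D).1 hD
  have column_op : fromBlocks (A - B * D⁻¹ * C) B 0 D =
      fromBlocks A B C D *
        fromBlocks (1 : Matrix n₁ n₁ R) 0 (-(D⁻¹ * C)) (1 : Matrix n₂ n₂ R) := by
    simp [fromBlocks_multiply, Matrix.mul_assoc, mul_nonsing_inv_cancel_left _ _ hD_det,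
      sub_eq_add_neg]
  rw [column_op, rank_mul_eq_left_of_isUnit_det _ _ (by simp)]

theorem rank_fromBlocks_zero₂₁_eq_card_add_card_iff [Nontrivial R] (A : Matrix m₁ n₁ R)
    (B : Matrix m₁ n₂ R) {D : Matrix m₂ n₂ R} (hD : D.rank = Fintype.card n₂) :
    (fromBlocks A B 0 D).rank = Fintype.card n₁ + Fintype.card n₂ ↔
      A.rank = Fintype.card n₁ := by
  rw [rank_eq_card_iff_forall_mulVec_eq_zero] at hD
  have mulVec_eq_zero_iff (x : n₁ → R) (v : n₂ → R) :
      fromBlocks A B 0 D *ᵥ Sum.elim x v = 0 ↔ A *ᵥ x = 0 ∧ v = 0 := by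
    have hD_iff : D *ᵥ v = 0 ↔ v = 0 := ⟨hD v, by rintro rfl; exact mulVec_zero D⟩
    rw [fromBlocks_mulVec, sumElim_eq_zero_iff]
    simp +contextual [hD_iff]
  rw [← Fintype.card_sum, rank_eq_card_iff_forall_mulVec_eq_zero,
    rank_eq_card_iff_forall_mulVec_eq_zero,
    (Equiv.sumArrowEquivProdArrow n₁ n₂ R).forall_congr_left, Prod.forall]
  change (∀ x v, fromBlocks A B 0 D *ᵥ Sum.elim x v = 0 → Sum.elim x v = 0) ↔ _
  simp [mulVec_eq_zero_iff, sumElim_eq_zero_iff]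

theorem rank_fromBlocks_eq_card_add_card_iff [Nontrivial R] [DecidableEq n₂]
    (A : Matrix m₁ n₁ R) (B : Matrix m₁ n₂ R) (C : Matrix n₂ n₁ R) {D : Matrix n₂ n₂ R}
    (hD : IsUnit D) :
    (fromBlocks A B C D).rank = Fintype.card n₁ + Fintype.card n₂ ↔
      (A - B * D⁻¹ * C).rank = Fintype.card n₁ := by
  rw [rank_fromBlocks_eq_rank_fromBlocks_schur A B C hD,
    rank_fromBlocks_zero₂₁_eq_card_add_card_iff _ _ (rank_of_isUnit D hD)]

end FullColumnRank

open Matrix in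
theorem observability_infinity_iff_structured_matrix_general {R e x v z y : Type*}
    [CommRing R] [Nontrivial R] [Fintype x] [Fintype v] [DecidableEq v] [Fintype z]
    (E : Matrix e x R) (Azx : Matrix z x R) (Azv : Matrix z v R)
    (Cx : Matrix y x R) (Cv : Matrix y v R) (Φ : Matrix v z R) (hwp : IsUnit (1 - Φ * Azv)) :
    (fromRows E (Cx + Cv * (1 - Φ * Azv)⁻¹ * (Φ * Azx))).rank = Fintype.card x ↔
      (fromRows (fromBlocks E 0 (-Cx) (-Cv)) (fromCols (-(Φ * Azx)) (1 - Φ * Azv))).rank =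
        Fintype.card x + Fintype.card v := by
  have regroup : fromRows (fromBlocks E 0 (-Cx) (-Cv)) (fromCols (-(Φ * Azx)) (1 - Φ * Azv)) =
      fromBlocks (fromRows E (-Cx)) (fromRows 0 (-Cv)) (-(Φ * Azx)) (1 - Φ * Azv) := by
    rw [← fromCols_fromRows_eq_fromBlocks, fromRows_fromCols_eq_fromBlocks]
  have schur : fromRows E (-Cx) - fromRows 0 (-Cv) * (1 - Φ * Azv)⁻¹ * -(Φ * Azx) =
      fromRows E (-(Cx + Cv * (1 - Φ * Azv)⁻¹ * (Φ * Azx))) := by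
    ext (i | i) j <;> simp [fromRows_mul, sub_eq_add_neg, add_comm]
  rw [regroup, rank_fromBlocks_eq_card_add_card_iff _ _ _ hwp, schur,
    rank_fromRows_neg_right_eq_card_iff]

/-- **Theorem 2, condition at infinity.** Under well-posedness (`I − Φ Azv` invertible),
with `C = Cx + Cv (I − Φ Azv)⁻¹ Φ Azx`, the stacked matrix `col{E, C}` has full column
rank iff the matrix `Ξ∞⁽ᵒ⁾ = [[E, 0],[−Cx, −Cv],[−Φ Azx, I − Φ Azv]]` has full column
rank. -/
theorem observability_infinity_iff_structured_matrix
    (Mx Mv Mz My : ℕ)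
    (E Axx : Matrix (Fin Mx) (Fin Mx) ℂ)
    (Axv : Matrix (Fin Mx) (Fin Mv) ℂ)
    (Azx : Matrix (Fin Mz) (Fin Mx) ℂ)
    (Azv : Matrix (Fin Mz) (Fin Mv) ℂ)
    (Cx : Matrix (Fin My) (Fin Mx) ℂ)
    (Cv : Matrix (Fin My) (Fin Mv) ℂ)
    (Φ : Matrix (Fin Mv) (Fin Mz) ℂ)
    (hwp : IsUnit ((1 : Matrix (Fin Mv) (Fin Mv) ℂ) - Φ * Azv))
    (Cmat : Matrix (Fin My) (Fin Mx) ℂ)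
    (hC : Cmat = Cx + Cv * ((1 : Matrix (Fin Mv) (Fin Mv) ℂ) - Φ * Azv)⁻¹ * (Φ * Azx)) :
    (Matrix.fromRows E Cmat).rank = Mx ↔
    (Matrix.fromRows
        (Matrix.fromBlocks E 0 (-Cx) (-Cv))
        (Matrix.fromCols (-(Φ * Azx)) ((1 : Matrix (Fin Mv) (Fin Mv) ℂ) - Φ * Azv))).rank
      = Mx + Mv := by
  subst hC
  simpa only [Fintype.card_fin] using
    observability_infinity_iff_structured_matrix_general E Azx Azv Cx Cv Φ hwp
end

section
/- Let E, A_xx be M_x×M_x, A_xv be M_x×M_v, A_zx be M_z×M_x, A_zv be M_z×M_v, B_x be M_x×M_u, B_z be M_z×M_u, and Φ be M_v×M_z complex matrices, with I_{M_z} − A_zv Φ invertible. Define A = A_xx + A_xv Φ (I − A_zv Φ)^{-1} A_zx and B = B_x + A_xv Φ (I − A_zv Φ)^{-1} B_z. Then for every complex λ_0, the matrix [λ_0 E − A, B] has full row rank if and only if the matrix Ξ^[c](λ_0) = [[λ_0 E − A_xx, −B_x, −A_xv Φ],[−A_zx, −B_z, I_{M_z} − A_zv Φ]] has full row rank. -/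
/-! `Ξ` is a block matrix with invertible lower right block `I − A_zv Φ`, and the Schur complement
of that block is `[λ₀E − A, −B]`. Block elimination therefore gives
`rank Ξ = rank [λ₀E − A, B] + M_z`, so either matrix has full row rank exactly when the other
does. -/

open Matrix

section RankNullity

universe u v w

variable {R : Type u} [Ring R] [HasRankNullity.{max v w} R] [StrongRankCondition R]

theorem finrank_prod_of_hasRankNullity (M : Type v) (N : Type w)
    [AddCommGroup M] [Module R M] [Module.Finite R M]
    [AddCommGroup N] [Module R N] [Module.Finite R N] :
    Module.finrank R (M × N) = Module.finrank R M + Module.finrank R N := by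
  have h := (LinearMap.inl R M N).range.finrank_quotient_add_finrank
  rw [LinearMap.finrank_range_of_inj LinearMap.inl_injective, ← LinearMap.ker_snd,
    ((LinearMap.snd R M N).quotKerEquivOfSurjective LinearMap.snd_surjective).finrank_eq] at h
  rw [← h, add_comm]

theorem finrank_range_prodMap {M N : Type*} {M' : Type v} {N' : Type w}
    [AddCommGroup M] [Module R M] [Module.Finite R M]
    [AddCommGroup N] [Module R N] [Module.Finite R N]
    [AddCommGroup M'] [Module R M'] [AddCommGroup N'] [Module R N']
    (f : M →ₗ[R] M') (g : N →ₗ[R] N') :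
    Module.finrank R (f.prodMap g).range =
      Module.finrank R f.range + Module.finrank R g.range := by
  have hfg : (f.prodMap g).range = (f.range.subtype.prodMap g.range.subtype).range := by
    simp only [LinearMap.range_prodMap, Submodule.range_subtype]
  have hinj : Function.Injective (f.range.subtype.prodMap g.range.subtype) :=
    f.range.subtype_injective.prodMap g.range.subtype_injective
  rw [hfg, LinearMap.finrank_range_of_inj hinj, finrank_prod_of_hasRankNullity]

end RankNullity

section MatrixRank

variable {R l m n o p : Type*}

theorem mulVecLin_fromBlocks_zero_zero [CommSemiring R] [Fintype m] [Fintype o]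
    (A : Matrix l m R) (D : Matrix n o R) :
    (fromBlocks A 0 0 D).mulVecLin =
      (LinearEquiv.sumArrowLequivProdArrow l n R R).symm.toLinearMap ∘ₗ
        A.mulVecLin.prodMap D.mulVecLin ∘ₗ
          (LinearEquiv.sumArrowLequivProdArrow m o R R).toLinearMap := by
  refine LinearMap.ext fun x ↦ ?_
  rw [mulVecLin_apply, fromBlocks_mulVec, zero_mulVec, zero_mulVec, add_zero, zero_add]
  rfl

theorem rank_fromBlocks_zero_zero [CommRing R] [IsDomain R] [Fintype m] [Fintype o]
    (A : Matrix l m R) (D : Matrix n o R) :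
    (fromBlocks A 0 0 D).rank = A.rank + D.rank := by
  rw [rank, mulVecLin_fromBlocks_zero_zero, LinearMap.range_comp, LinearEquiv.finrank_map_eq,
    LinearEquiv.range_comp, finrank_range_prodMap, rank, rank]

/-- **Guttman rank additivity formula** -/
theorem rank_fromBlocks_of_isUnit₂₂ [CommRing R] [IsDomain R]
    [Finite l] [Fintype m] [Fintype n] [DecidableEq n]
    (A : Matrix l m R) (B : Matrix l n R) (C : Matrix n m R) {D : Matrix n n R} (hD : IsUnit D) :
    (fromBlocks A B C D).rank = (A - B * D⁻¹ * C).rank + Fintype.card n := by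
  classical
  have := Fintype.ofFinite l
  let := hD.invertible
  rw [fromBlocks_eq_of_invertible₂₂, invOf_eq_nonsing_inv,
    rank_mul_eq_left_of_isUnit_det, rank_mul_eq_right_of_isUnit_det,
    rank_fromBlocks_zero_zero, rank_of_isUnit D hD]
  · simp only [det_fromBlocks_zero₂₁, det_one, mul_one, isUnit_one]
  · simp only [det_fromBlocks_zero₁₂, det_one, mul_one, isUnit_one]

theorem rank_fromCols_neg_right [CommRing R] [Fintype m] [Fintype n]
    (A : Matrix l m R) (B : Matrix l n R) :
    (fromCols A (-B)).rank = (fromCols A B).rank := by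
  classical
  have hmul : fromCols A (-B) =
      fromCols A B * (fromBlocks 1 0 0 (-1) : Matrix (m ⊕ n) (m ⊕ n) R) := by
    simp only [fromCols_mul_fromBlocks, Matrix.mul_one, Matrix.mul_zero, Matrix.mul_neg, add_zero,
      zero_add]
  rw [hmul, rank_mul_eq_left_of_isUnit_det]
  rw [det_fromBlocks_zero₂₁, det_one, one_mul]
  exact (isUnit_iff_isUnit_det _).1 isUnit_one.neg

theorem fromCols_sub_fromCols [Sub R] (A₁ B₁ : Matrix l m R) (A₂ B₂ : Matrix l n R) :
    fromCols A₁ A₂ - fromCols B₁ B₂ = fromCols (A₁ - B₁) (A₂ - B₂) := by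
  ext i (j | j) <;> rfl

theorem rank_fromBlocks_fromCols_assoc [CommSemiring R] [Fintype m] [Fintype n] [Fintype o]
    (A₁ : Matrix l m R) (A₂ : Matrix l n R) (A₃ : Matrix l o R)
    (B₁ : Matrix p m R) (B₂ : Matrix p n R) (B₃ : Matrix p o R) :
    (fromBlocks A₁ (fromCols A₂ A₃) B₁ (fromCols B₂ B₃)).rank =
      (fromBlocks (fromCols A₁ A₂) A₃ (fromCols B₁ B₂) B₃).rank := by
  rw [← rank_submatrix _ (Equiv.refl (l ⊕ p)) (Equiv.sumAssoc m n o)]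
  congr 1
  ext (i | i) ((j | j) | j) <;> rfl

end MatrixRank

theorem controllability_pencil_iff_structured_pencil_general {K : Type*} [CommRing K] [IsDomain K]
    {w x v z u : Type*} [Finite w] [Fintype x] [Fintype v] [Fintype z] [DecidableEq z] [Fintype u]
    (E Axx : Matrix w x K) (Axv : Matrix w v K) (Azx : Matrix z x K) (Azv : Matrix z v K)
    (Bx : Matrix w u K) (Bz : Matrix z u K) (Φ : Matrix v z K) (hwp : IsUnit (1 - Azv * Φ))
    (A : Matrix w x K) (hA : A = Axx + Axv * Φ * (1 - Azv * Φ)⁻¹ * Azx)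
    (B : Matrix w u K) (hB : B = Bx + Axv * Φ * (1 - Azv * Φ)⁻¹ * Bz) (lam₀ : K) :
    (fromBlocks
        (lam₀ • E - Axx) (fromCols (-Bx) (-(Axv * Φ)))
        (-Azx) (fromCols (-Bz) (1 - Azv * Φ))).rank =
      (fromCols (lam₀ • E - A) B).rank + Fintype.card z := by
  have hschur : fromCols (lam₀ • E - Axx) (-Bx) -
      -(Axv * Φ) * (1 - Azv * Φ)⁻¹ * fromCols (-Azx) (-Bz) = fromCols (lam₀ • E - A) (-B) := by
    rw [mul_fromCols, fromCols_sub_fromCols, hA, hB]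
    simp only [Matrix.neg_mul, Matrix.mul_neg, neg_neg, sub_sub, neg_add']
  rw [rank_fromBlocks_fromCols_assoc, rank_fromBlocks_of_isUnit₂₂ _ _ _ hwp, hschur,
    rank_fromCols_neg_right]

/-- **Corollary 1, pencil condition.** Under well-posedness (`I − Azv Φ` invertible),
with `A = Axx + Axv Φ (I − Azv Φ)⁻¹ Azx` and `B = Bx + Axv Φ (I − Azv Φ)⁻¹ Bz`, the
matrix `[λ₀E − A, B]` has full row rank iff the matrix
`Ξ⁽ᶜ⁾(λ₀) = [[λ₀E − Axx, −Bx, −Axv Φ],[−Azx, −Bz, I − Azv Φ]]` has full row rank. -/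
theorem controllability_pencil_iff_structured_pencil
    (Mx Mv Mz Mu : ℕ)
    (E Axx : Matrix (Fin Mx) (Fin Mx) ℂ)
    (Axv : Matrix (Fin Mx) (Fin Mv) ℂ)
    (Azx : Matrix (Fin Mz) (Fin Mx) ℂ)
    (Azv : Matrix (Fin Mz) (Fin Mv) ℂ)
    (Bx : Matrix (Fin Mx) (Fin Mu) ℂ)
    (Bz : Matrix (Fin Mz) (Fin Mu) ℂ)
    (Φ : Matrix (Fin Mv) (Fin Mz) ℂ)
    (hwp : IsUnit ((1 : Matrix (Fin Mz) (Fin Mz) ℂ) - Azv * Φ))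
    (A : Matrix (Fin Mx) (Fin Mx) ℂ)
    (hA : A = Axx + Axv * Φ * ((1 : Matrix (Fin Mz) (Fin Mz) ℂ) - Azv * Φ)⁻¹ * Azx)
    (B : Matrix (Fin Mx) (Fin Mu) ℂ)
    (hB : B = Bx + Axv * Φ * ((1 : Matrix (Fin Mz) (Fin Mz) ℂ) - Azv * Φ)⁻¹ * Bz)
    (lam₀ : ℂ) :
    (Matrix.fromCols (lam₀ • E - A) B).rank = Mx ↔
    (Matrix.fromBlocks
        (lam₀ • E - Axx) (Matrix.fromCols (-Bx) (-(Axv * Φ)))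
        (-Azx) (Matrix.fromCols (-Bz) ((1 : Matrix (Fin Mz) (Fin Mz) ℂ) - Azv * Φ))).rank
      = Mx + Mz := by
  rw [controllability_pencil_iff_structured_pencil_general E Axx Axv Azx Azv Bx Bz Φ hwp A hA B hB,
    Fintype.card_fin, Nat.add_right_cancel_iff]
end

section
/- Let E, A_xx be M_x×M_x, A_xv be M_x×M_v, A_zx be M_z×M_x, A_zv be M_z×M_v, C_x be M_y×M_x, C_v be M_y×M_v, and Φ be M_v×M_z complex matrices. Let N_x (M_x columns-block) and N_v (M_v columns-block) be matrices such that col{N_x, N_v} has full column rank and its columns span the null space of [C_x, C_v]. Then for every complex λ_0, the matrix Ξ^[o](λ_0) = [[λ_0 E − A_xx, −A_xv],[−C_x, −C_v],[−Φ A_zx, I_{M_v} − Φ A_zv]] has full column rank if and only if the matrix col{λ_0 E N_x − (A_xx N_x + A_xv N_v), N_v − Φ (A_zx N_x + A_zv N_v)} has full column rank. -/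
/-!
A vector in the kernel of the pencil lies in the kernel of `[Cx, Cv]`, hence is uniquely
`col{Nx, Nv} *ᵥ w`. The reduced matrix is the pencil without its row `[-Cx, -Cv]`, multiplied on the
right by `col{Nx, Nv}`, so its kernel consists precisely of these coordinates `w`.
-/

open Matrix

theorem ker_inf_ker_eq_bot_iff_ker_comp_eq_bot {R K M N P : Type*} [Semiring R]
    [AddCommMonoid K] [AddCommMonoid M] [AddCommMonoid N] [AddCommMonoid P]
    [Module R K] [Module R M] [Module R N] [Module R P]
    {i : K →ₗ[R] M} {g : M →ₗ[R] P} (hi : Function.Injective i)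
    (hexact : LinearMap.range i = LinearMap.ker g) (f : M →ₗ[R] N) :
    LinearMap.ker f ⊓ LinearMap.ker g = ⊥ ↔ LinearMap.ker (f ∘ₗ i) = ⊥ := by
  rw [← hexact, inf_comm, ← Submodule.map_comap_eq, LinearMap.ker_comp,
    ← (Submodule.map_injective_of_injective hi).eq_iff (b := ⊥), Submodule.map_bot]

theorem ker_mulVecLin_fromRows {R m₁ m₂ n : Type*} [CommSemiring R] [Fintype n]
    (A : Matrix m₁ n R) (B : Matrix m₂ n R) :
    LinearMap.ker (fromRows A B).mulVecLin =
      LinearMap.ker A.mulVecLin ⊓ LinearMap.ker B.mulVecLin := by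
  ext v
  rw [LinearMap.mem_ker, mulVecLin_apply, fromRows_mulVec, ← Sum.elim_zero_zero, Sum.elim_eq_iff]
  rfl

theorem ker_mulVecLin_neg {R m n : Type*} [CommRing R] [Fintype n] (A : Matrix m n R) :
    LinearMap.ker (-A).mulVecLin = LinearMap.ker A.mulVecLin := by
  ext v
  simp

theorem rank_eq_of_ker_mulVecLin_eq_s17 {R m₁ m₂ n : Type*} [CommRing R] [Fintype n]
    {A : Matrix m₁ n R} {B : Matrix m₂ n R}
    (h : LinearMap.ker A.mulVecLin = LinearMap.ker B.mulVecLin) : A.rank = B.rank :=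
  (A.mulVecLin.quotKerEquivRange.symm ≪≫ₗ Submodule.quotEquivOfEq _ _ h ≪≫ₗ
    B.mulVecLin.quotKerEquivRange).finrank_eq

theorem rank_fromRows_fromBlocks_neg {R m q p x v : Type*} [CommRing R] [Fintype x] [Fintype v]
    (A : Matrix m x R) (B : Matrix m v R) (Cx : Matrix p x R) (Cv : Matrix p v R)
    (D : Matrix q x R) (F : Matrix q v R) :
    (fromRows (fromBlocks A B (-Cx) (-Cv)) (fromCols D F)).rank =
      (fromRows (fromBlocks A B D F) (fromCols Cx Cv)).rank :=
  rank_eq_of_ker_mulVecLin_eq_s17 <| by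
    simp only [← fromRows_fromCols_eq_fromBlocks, ← fromCols_neg, ker_mulVecLin_fromRows,
      ker_mulVecLin_neg, inf_right_comm]

section FullColumnRank

variable {R : Type*} [CommRing R] [IsDomain R]

theorem rank_eq_card_iff_ker_mulVecLin_eq_bot {m n : Type*} [Fintype n] (A : Matrix m n R) :
    A.rank = Fintype.card n ↔ LinearMap.ker A.mulVecLin = ⊥ := by
  refine ⟨fun h => ?_, fun h => ?_⟩
  · have disjoint_ker : Disjoint ⊤ (LinearMap.ker A.mulVecLin) :=
      Submodule.disjoint_ker_of_finrank_le _ <| by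
        rw [finrank_top, Submodule.map_top, Module.finrank_fintype_fun_eq_card, ← h, Matrix.rank]
    exact top_disjoint.mp disjoint_ker
  · rw [Matrix.rank, LinearMap.finrank_range_of_inj (LinearMap.ker_eq_bot.mp h),
      Module.finrank_fintype_fun_eq_card]

theorem rank_fromRows_eq_card_iff_rank_mul_eq_card {m p n k : Type*} [Fintype n] [Fintype k]
    {C : Matrix p n R} {N : Matrix n k R} (hfcr : N.rank = Fintype.card k)
    (hspan : LinearMap.range N.mulVecLin = LinearMap.ker C.mulVecLin) (P : Matrix m n R) :
    (fromRows P C).rank = Fintype.card n ↔ (P * N).rank = Fintype.card k := by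
  rw [rank_eq_card_iff_ker_mulVecLin_eq_bot] at hfcr
  rw [rank_eq_card_iff_ker_mulVecLin_eq_bot, rank_eq_card_iff_ker_mulVecLin_eq_bot,
    ker_mulVecLin_fromRows, mulVecLin_mul,
    ker_inf_ker_eq_bot_iff_ker_comp_eq_bot (LinearMap.ker_eq_bot.mp hfcr) hspan]

theorem observability_pencil_iff_reduced_general {m x v z p k : Type*}
    [Fintype x] [Fintype v] [DecidableEq v] [Fintype z] [Fintype k]
    (E Axx : Matrix m x R) (Axv : Matrix m v R) (Azx : Matrix z x R) (Azv : Matrix z v R)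
    {Cx : Matrix p x R} {Cv : Matrix p v R} (Φ : Matrix v z R)
    {Nx : Matrix x k R} {Nv : Matrix v k R}
    (hfcr : (fromRows Nx Nv).rank = Fintype.card k)
    (hspan : LinearMap.range (fromRows Nx Nv).mulVecLin
      = LinearMap.ker (fromCols Cx Cv).mulVecLin)
    (lam₀ : R) :
    (fromRows
        (fromBlocks (lam₀ • E - Axx) (-Axv) (-Cx) (-Cv))
        (fromCols (-(Φ * Azx)) (1 - Φ * Azv))).rank
      = Fintype.card x + Fintype.card v ↔
    (fromRows
        (lam₀ • (E * Nx) - (Axx * Nx + Axv * Nv))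
        (Nv - Φ * (Azx * Nx + Azv * Nv))).rank = Fintype.card k := by
  have reduced_eq_mul :
      fromRows (lam₀ • (E * Nx) - (Axx * Nx + Axv * Nv)) (Nv - Φ * (Azx * Nx + Azv * Nv)) =
        fromBlocks (lam₀ • E - Axx) (-Axv) (-(Φ * Azx)) (1 - Φ * Azv) * fromRows Nx Nv := by
    rw [fromBlocks_mul_fromRows]
    congr 1 <;>
      simp only [Matrix.sub_mul, Matrix.neg_mul, Matrix.mul_add, smul_mul, Matrix.one_mul,
        Matrix.mul_assoc] <;>
      abel
  rw [reduced_eq_mul, rank_fromRows_fromBlocks_neg, ← Fintype.card_sum]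
  exact rank_fromRows_eq_card_iff_rank_mul_eq_card hfcr hspan _

end FullColumnRank

/-- **Reduction of the observability pencil via a kernel basis of `[Cx, Cv]`.**
If `col{Nx, Nv}` has full column rank and its columns span the null space of `[Cx, Cv]`,
then for every complex `λ₀` the matrix `Ξ⁽ᵒ⁾(λ₀)` has full column rank iff
`col{λ₀ E Nx − (Axx Nx + Axv Nv), Nv − Φ (Azx Nx + Azv Nv)}` has full column rank. -/
theorem observability_pencil_iff_reduced
    (Mx Mv Mz My k : ℕ)
    (E Axx : Matrix (Fin Mx) (Fin Mx) ℂ)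
    (Axv : Matrix (Fin Mx) (Fin Mv) ℂ)
    (Azx : Matrix (Fin Mz) (Fin Mx) ℂ)
    (Azv : Matrix (Fin Mz) (Fin Mv) ℂ)
    (Cx : Matrix (Fin My) (Fin Mx) ℂ)
    (Cv : Matrix (Fin My) (Fin Mv) ℂ)
    (Φ : Matrix (Fin Mv) (Fin Mz) ℂ)
    (Nx : Matrix (Fin Mx) (Fin k) ℂ)
    (Nv : Matrix (Fin Mv) (Fin k) ℂ)
    (hfcr : (Matrix.fromRows Nx Nv).rank = k)
    (hspan : LinearMap.range (Matrix.fromRows Nx Nv).mulVecLin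
      = LinearMap.ker (Matrix.fromCols Cx Cv).mulVecLin)
    (lam₀ : ℂ) :
    (Matrix.fromRows
        (Matrix.fromBlocks (lam₀ • E - Axx) (-Axv) (-Cx) (-Cv))
        (Matrix.fromCols (-(Φ * Azx)) ((1 : Matrix (Fin Mv) (Fin Mv) ℂ) - Φ * Azv))).rank
      = Mx + Mv ↔
    (Matrix.fromRows
        (lam₀ • (E * Nx) - (Axx * Nx + Axv * Nv))
        (Nv - Φ * (Azx * Nx + Azv * Nv))).rank = k := by
  simpa only [Fintype.card_fin] using observability_pencil_iff_reduced_general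
    E Axx Axv Azx Azv Φ (hfcr.trans (Fintype.card_fin k).symm) hspan lam₀
end
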